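/- For every integer n ≥ 1, every nonnegative integer p, every λ ∈ {-1, 0}, every real α with 0 ≤ α < 1/2 and every x ∈ I, the second central moment of the generalized operator satisfies L_n^{(α)}((t-x)²; x) := Σ_k w_{n,k}^{(α)}(x)·(k/n - x)² = ((n+p)/(n(1-λα)(1-(λ+1)α))) · [ (1-λα)(1-(λ+1)α)·n x²/(n+p) + (n+p+λ+1)·x(x+α)/(n(1-2(λ+1)α)) + x(1+λx)/n - 2(1-λα)x² ], the sum/series being convergent. -/

import Mathlib

/-!
The weights are Pólya urn laws, written with the rising products
`R α x k = x (x + α) ⋯ (x + (k - 1) α)`.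

* For `λ = -1` they form the Pólya–Eggenberger law with parameters `(N, x, 1 - x)`, `N = n + p`.
  Total mass one is the Vandermonde identity for rising products (`vandermonde`).
* For `λ = 0` they form the inverse Pólya law (number of black draws before the `N`-th white one)
  with parameters `(N, 1, x)`. For `N = 1` the mass telescopes, because
  `R α b k / R α (a + b) k → 0`, a consequence of the divergence of the harmonic series. In general
  the law for `N + 1` is a mixture, over the waiting time `i` for the first white draw, of laws for
  `N` with shifted parameters `(a + α, b + i α)` (`hasSum_invPolya`).

In both cases multiplying a weight by `k` gives a constant multiple of the weight at `k - 1` of the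
same law with shifted parameters: `(N - 1, a + α, b)` and `(N + 1, a - α, b + α)` respectively. The
first two factorial moments therefore reduce to total mass, and `(k / n - x) ^ 2` is a combination
of `1`, `k` and `k (k - 1)`.
-/

/-- The weights `w_{n,k}^{(α)}(x)` of the generalized positive linear operator,
for the parameter `lam`(= λ) which is `-1` or `0`.  Empty products equal `1`;
for `lam = -1` and `k > n + p` the binomial coefficient vanishes, so these
weights vanish and summing over all `k : ℕ` is the same as summing over
`0 ≤ k ≤ n + p`. -/
noncomputable def w (n p : ℕ) (lam : ℤ) (α x : ℝ) (k : ℕ) : ℝ :=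
  (((n : ℝ) + p) / ((n : ℝ) + p + ((lam : ℝ) + 1) * k)) *
    (Nat.choose ((n : ℤ) + p + (lam + 1) * k).toNat k : ℝ) *
    (∏ i ∈ Finset.range k, (x + (i : ℝ) * α)) *
    (∏ i ∈ Finset.range ((n : ℤ) + p + lam * k).toNat,
        (1 + (lam : ℝ) * x + (i : ℝ) * α)) /
    (∏ i ∈ Finset.range ((n : ℤ) + p + (lam + 1) * k).toNat,
        (1 + ((lam : ℝ) + 1) * x + (i : ℝ) * α))

/-- The interval `I`: `[0,1]` when `λ = -1` and `[0,∞)` when `λ = 0`. -/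
noncomputable def Iset (lam : ℤ) : Set ℝ :=
  if lam = -1 then Set.Icc (0 : ℝ) 1 else Set.Ici (0 : ℝ)

open Finset Filter Topology

/-! ### Rising products -/

/-- The rising product `x (x + α) ⋯ (x + (k - 1) α)`. -/
noncomputable def R (α x : ℝ) (k : ℕ) : ℝ := ∏ i ∈ range k, (x + (i : ℝ) * α)

lemma R_zero (α x : ℝ) : R α x 0 = 1 := by simp [R]

lemma R_succ (α x : ℝ) (k : ℕ) : R α x (k + 1) = R α x k * (x + k * α) := by
  simp [R, prod_range_succ]

lemma R_add (α x : ℝ) (i j : ℕ) : R α x (i + j) = R α x i * R α (x + i * α) j := by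
  simp only [R, prod_range_add]
  congr 1
  refine prod_congr rfl fun l _ => ?_
  push_cast; ring

lemma R_succ' (α x : ℝ) (k : ℕ) : R α x (k + 1) = x * R α (x + α) k := by
  rw [add_comm k 1, R_add]
  simp [R]

lemma R_pos {α x : ℝ} (hα : 0 ≤ α) (hx : 0 < x) (k : ℕ) : 0 < R α x k :=
  prod_pos fun i _ => by positivity

lemma R_nonneg {α x : ℝ} (hα : 0 ≤ α) (hx : 0 ≤ x) (k : ℕ) : 0 ≤ R α x k :=
  prod_nonneg fun i _ => by positivity

lemma hasSum_congr_of_eq {f g : ℕ → ℝ} {s t : ℝ} (h : HasSum f s) (hfg : ∀ k, g k = f k)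
    (hst : t = s) : HasSum g t := by
  rw [hst, funext hfg]
  exact h

lemma hasSum_of_shift {f : ℕ → ℝ} {s : ℝ} (h0 : f 0 = 0) (h : HasSum (fun k => f (k + 1)) s) :
    HasSum f s := by
  rw [← hasSum_nat_add_iff' 1]
  simpa [h0] using h

/-! ### The Pólya law -/

/-- Vandermonde's identity for rising products. -/
lemma vandermonde (α a b : ℝ) (N : ℕ) :
    ∑ k ∈ range (N + 1), (N.choose k : ℝ) * R α a k * R α b (N - k) = R α (a + b) N := by
  induction N generalizing a with
  | zero => simp [R]
  | succ N ih =>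
    -- Pascal's rule splits the sum into one ending with a factor of `b` and one starting with `a`.
    have h1 : ∑ k ∈ range (N + 1), (N.choose k : ℝ) * R α (a + α) k * R α b (N - k) =
        R α (a + b + α) N := by rw [ih]; congr 1; ring
    have h2 := ih a
    rw [sum_range_succ']
    have h3 : ∀ k ∈ range (N + 1),
        ((N + 1).choose (k + 1) : ℝ) * R α a (k + 1) * R α b (N + 1 - (k + 1)) =
        a * ((N.choose k : ℝ) * R α (a + α) k * R α b (N - k)) +
        (N.choose (k + 1) : ℝ) * R α a (k + 1) * R α b (N - k) := by
      intro k _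
      rw [Nat.choose_succ_succ, Nat.add_sub_add_right, R_succ']
      push_cast; ring
    rw [sum_congr rfl h3, sum_add_distrib, ← mul_sum, h1, add_assoc]
    have h4 : ∑ k ∈ range (N + 1), (N.choose (k + 1) : ℝ) * R α a (k + 1) * R α b (N - k) +
        ((N + 1).choose 0 : ℝ) * R α a 0 * R α b (N + 1 - 0) =
        ∑ k ∈ range (N + 1), (N.choose k : ℝ) * R α a k * R α b (N + 1 - k) := by
      have := sum_range_succ' (fun k => (N.choose k : ℝ) * R α a k * R α b (N + 1 - k)) (N + 1)
      rw [sum_range_succ] at this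
      simp only [Nat.choose_succ_self, Nat.cast_zero, zero_mul, add_zero,
        Nat.add_sub_add_right] at this
      rw [this]; simp
    rw [h4]
    -- The factors `b + (N - k) α` and `a + k α` add up to `a + b + N α`.
    have h5 : ∀ k ∈ range (N + 1), (N.choose k : ℝ) * R α a k * R α b (N + 1 - k) =
        (a + b + N * α) * ((N.choose k : ℝ) * R α a k * R α b (N - k)) -
        a * ((N.choose k : ℝ) * R α (a + α) k * R α b (N - k)) := by
      intro k hk
      have hk' : k ≤ N := by simpa [Nat.lt_succ_iff] using hk
      have e : a * R α (a + α) k = R α a k * (a + k * α) := by rw [← R_succ', R_succ]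
      rw [Nat.succ_sub hk', R_succ, Nat.cast_sub hk']
      linear_combination ((N.choose k : ℝ) * R α b (N - k)) * e
    rw [sum_congr rfl h5, sum_sub_distrib, ← mul_sum, ← mul_sum, h1, h2, R_succ]
    ring

/-- The Pólya law: the probability of `k` white draws among `N`, with initial masses `a` (white)
and `b` (black) and increment `α`. -/
noncomputable def polya (α : ℝ) (N : ℕ) (a b : ℝ) (k : ℕ) : ℝ :=
  (N.choose k : ℝ) * R α a k * R α b (N - k) / R α (a + b) N

lemma hasSum_polya {α a b : ℝ} (hα : 0 ≤ α) (hab : 0 < a + b) (N : ℕ) :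
    HasSum (polya α N a b) 1 := by
  have h : ∑ k ∈ range (N + 1), polya α N a b k = 1 := by
    simp only [polya]
    rw [← sum_div, vandermonde, div_self (R_pos hα hab N).ne']
  rw [← h]
  refine hasSum_sum_of_ne_finset_zero fun k hk => ?_
  have : N < k := by simpa [Nat.lt_succ_iff] using hk
  simp [polya, Nat.choose_eq_zero_of_lt this]

/-- Multiplication by `k` shifts the parameters of the Pólya law. -/
lemma polya_shift {α a b : ℝ} (N k : ℕ) :
    ((k : ℝ) + 1) * polya α (N + 1) a b (k + 1) =
      ((N : ℝ) + 1) * a / (a + b) * polya α N (a + α) b k := by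
  have hc : ((N : ℝ) + 1) * N.choose k = (N + 1).choose (k + 1) * ((k : ℝ) + 1) := by
    exact_mod_cast Nat.add_one_mul_choose_eq N k
  have e : a + α + b = a + b + α := by ring
  simp only [polya, Nat.add_sub_add_right, R_succ', e]
  rw [div_mul_div_comm, ← mul_div_assoc]
  congr 1
  linear_combination -(a * R α (a + α) k * R α b (N - k)) * hc

lemma hasSum_polya_one {α a b : ℝ} (hα : 0 ≤ α) (hab : 0 < a + b) (N : ℕ) :
    HasSum (fun k : ℕ => (k : ℝ) * polya α N a b k) (N * a / (a + b)) := by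
  refine hasSum_of_shift (by simp) ?_
  cases N with
  | zero => simp [polya]
  | succ N =>
    push_cast
    simp only [polya_shift]
    simpa using (hasSum_polya (a := a + α) (b := b) hα (by linarith) N).mul_left
      (((N : ℝ) + 1) * a / (a + b))

lemma hasSum_polya_two {α a b : ℝ} (hα : 0 ≤ α) (hab : 0 < a + b) (N : ℕ) :
    HasSum (fun k : ℕ => (k : ℝ) * (k - 1) * polya α N a b k)
      (N * a / (a + b) * ((N - 1) * (a + α) / (a + b + α))) := by
  refine hasSum_of_shift (by simp) ?_
  cases N with
  | zero => simp [polya]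
  | succ N =>
    refine hasSum_congr_of_eq ((hasSum_polya_one (a := a + α) (b := b) hα (by linarith) N).mul_left
      (((N : ℝ) + 1) * a / (a + b))) (fun k => ?_) ?_
    · push_cast
      linear_combination (k : ℝ) * polya_shift (α := α) (a := a) (b := b) N k
    · push_cast
      rw [show a + b + α = a + α + b by ring]
      ring

/-! ### The inverse Pólya law -/

/-- The inverse Pólya law: the probability of `k` black draws before the `(M + 1)`-st white one,
with initial masses `a` (white) and `b` (black) and increment `α`. -/
noncomputable def invPolya (α : ℝ) (M : ℕ) (a b : ℝ) (k : ℕ) : ℝ :=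
  ((M + k).choose k : ℝ) * R α b k * R α a (M + 1) / R α (a + b) (M + 1 + k)

lemma invPolya_nonneg {α a b : ℝ} (hα : 0 ≤ α) (ha : 0 < a) (hb : 0 ≤ b) (M k : ℕ) :
    0 ≤ invPolya α M a b k := by
  have := R_nonneg hα hb k
  have := R_nonneg hα ha.le (M + 1)
  have := R_nonneg hα (add_nonneg ha.le hb) (M + 1 + k)
  unfold invPolya
  positivity

/-- The probability that the first `k` draws are all black tends to zero. -/
lemma tendsto_ratio {α a b : ℝ} (hα : 0 ≤ α) (ha : 0 < a) (hb : 0 ≤ b) :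
    Tendsto (fun k => R α b k / R α (a + b) k) atTop (𝓝 0) := by
  have hab : 0 < a + b := by linarith
  -- With `u i = a / (a + b + i α)` the ratio is `∏ (1 - u i)`, and `∏ (1 - u i) * (1 + ∑ u i) ≤ 1`.
  have key : ∀ k, R α b k / R α (a + b) k * (1 + ∑ i ∈ range k, a / (a + b + i * α)) ≤ 1 := by
    intro k
    induction k with
    | zero => simp [R]
    | succ k ih =>
      have hd : 0 < a + b + k * α := by positivity
      have hS : 0 ≤ ∑ i ∈ range k, a / (a + b + i * α) :=
        sum_nonneg fun i _ => by positivity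
      have ht : 0 ≤ R α b k / R α (a + b) k :=
        div_nonneg (R_nonneg hα hb k) (R_pos hα hab k).le
      have hu : 0 ≤ a / (a + b + k * α) := by positivity
      have hf : (b + k * α) / (a + b + k * α) = 1 - a / (a + b + k * α) := by
        field_simp; ring
      rw [R_succ, R_succ, mul_div_mul_comm, sum_range_succ, hf]
      refine le_trans ?_ ih
      rw [mul_assoc]
      refine mul_le_mul_of_nonneg_left ?_ ht
      nlinarith [mul_nonneg hu hS, mul_nonneg hu hu]
  have hc : 0 < a / (a + b + α) := by positivity
  have hle : ∀ k, a / (a + b + α) * ∑ i ∈ range k, 1 / ((i : ℝ) + 1) ≤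
      1 + ∑ i ∈ range k, a / (a + b + i * α) := by
    intro k
    rw [mul_sum]
    refine le_trans (sum_le_sum fun i _ => ?_) (le_add_of_nonneg_left zero_le_one)
    rw [div_mul_div_comm, mul_one]
    refine div_le_div_of_nonneg_left ha.le (by positivity) ?_
    have : (0 : ℝ) ≤ i * (a + b) := by positivity
    nlinarith
  have hT : Tendsto (fun k : ℕ => 1 + ∑ i ∈ range k, a / (a + b + i * α)) atTop atTop :=
    tendsto_atTop_mono hle
      (Real.tendsto_sum_range_one_div_nat_succ_atTop.const_mul_atTop hc)
  refine squeeze_zero (fun k => div_nonneg (R_nonneg hα hb k) (R_pos hα hab k).le) (fun k => ?_)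
    hT.inv_tendsto_atTop
  have hS : 0 < 1 + ∑ i ∈ range k, a / (a + b + i * α) :=
    add_pos_of_pos_of_nonneg one_pos (sum_nonneg fun i _ => by positivity)
  rw [Pi.inv_apply, ← one_div, le_div_iff₀ hS]
  exact key k

lemma hasSum_invPolya_zero {α a b : ℝ} (hα : 0 ≤ α) (ha : 0 < a) (hb : 0 ≤ b) :
    HasSum (invPolya α 0 a b) 1 := by
  have hab : 0 < a + b := by linarith
  rw [hasSum_iff_tendsto_nat_of_nonneg (invPolya_nonneg hα ha hb 0)]
  have : ∀ k, ∑ i ∈ range k, invPolya α 0 a b i = 1 - R α b k / R α (a + b) k := by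
    intro k
    induction k with
    | zero => simp [R]
    | succ k ih =>
      have hd : 0 < a + b + k * α := by positivity
      have hR := R_pos hα hab k
      have e : R α a (0 + 1) = a := by simp [R]
      rw [sum_range_succ, ih, invPolya, e, zero_add, add_comm 1 k, R_succ, R_succ]
      simp only [Nat.choose_self, Nat.cast_one]
      field_simp
      ring
  simp only [this]
  simpa using (tendsto_ratio hα ha hb).const_sub 1

lemma hockey (M k : ℕ) : ∑ j ∈ range (k + 1), (M + j).choose j = (M + 1 + k).choose k := by
  induction k with
  | zero => simp
  | succ k ih =>
    rw [sum_range_succ, ih, ← add_assoc (M + 1) k 1, Nat.choose_succ_succ]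
    congr 2; ring

/-- Conditioning on the number `i` of black draws before the first white one. -/
lemma invPolya_split {α a b : ℝ} (M i j : ℕ) :
    invPolya α 0 a b i * invPolya α M (a + α) (b + i * α) j =
      ((M + j).choose j : ℝ) *
        (R α b (i + j) * R α a (M + 1 + 1) / R α (a + b) (M + 1 + 1 + (i + j))) := by
  have e1 : M + 1 + 1 + (i + j) = (0 + 1 + i) + (M + 1 + j) := by ring
  have e2 : a + α + (b + i * α) = a + b + ((0 + 1 + i : ℕ) : ℝ) * α := by push_cast; ring
  rw [e1, R_add α (a + b), R_add α b, R_succ' α a (M + 1), invPolya, invPolya, e2]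
  have e : R α a (0 + 1) = a := by simp [R]
  rw [e, div_mul_div_comm]
  simp only [zero_add, Nat.choose_self, Nat.cast_one]
  ring

lemma hasSum_invPolya {α a b : ℝ} (hα : 0 ≤ α) (ha : 0 < a) (hb : 0 ≤ b) (M : ℕ) :
    HasSum (invPolya α M a b) 1 := by
  induction M generalizing a b with
  | zero => exact hasSum_invPolya_zero hα ha hb
  | succ M ih =>
    set F : ℕ × ℕ → ℝ := fun q =>
      invPolya α 0 a b q.1 * invPolya α M (a + α) (b + q.1 * α) q.2 with hF
    have haα : 0 < a + α := by linarith
    have hbα : ∀ i : ℕ, 0 ≤ b + i * α := fun i => by positivity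
    have hrow : ∀ i, HasSum (fun j => F (i, j)) (invPolya α 0 a b i) := fun i => by
      simpa [hF] using (ih haα (hbα i)).mul_left (invPolya α 0 a b i)
    have h0 := hasSum_invPolya_zero hα ha hb
    have hFnn : 0 ≤ F := fun q =>
      mul_nonneg (invPolya_nonneg hα ha hb _ _) (invPolya_nonneg hα haα (hbα _) _ _)
    have hFs : Summable F := (summable_prod_of_nonneg hFnn).2
      ⟨fun i => (hrow i).summable, by
        simpa only [(hrow _).tsum_eq] using h0.summable⟩
    have hF1 : HasSum F 1 := by
      have := (hFs.hasSum.prod_fiberwise hrow).unique h0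
      rw [← this]; exact hFs.hasSum
    have hs := ((Equiv.hasSum_iff (f := F) (HasAntidiagonal.sigmaAntidiagonalEquivProd (A := ℕ))).2 hF1).sigma (fun k => hasSum_fintype _)
    refine hasSum_congr_of_eq hs (fun k => ?_) rfl
    have hk : ∑ q ∈ antidiagonal k, F q = invPolya α (M + 1) a b k := by
      have h1 : ∀ q ∈ antidiagonal k, F q = ((M + q.2).choose q.2 : ℝ) *
          (R α b k * R α a (M + 1 + 1) / R α (a + b) (M + 1 + 1 + k)) := by
        intro q hq
        rw [HasAntidiagonal.mem_antidiagonal] at hq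
        rw [hF, ← hq]
        exact invPolya_split M q.1 q.2
      have h2 : ∑ q ∈ antidiagonal k, ((M + q.2).choose q.2 : ℝ) = (M + 1 + k).choose k := by
        rw [← hockey, ← Nat.sum_antidiagonal_swap, Nat.sum_antidiagonal_eq_sum_range_succ_mk]
        push_cast; rfl
      rw [sum_congr rfl h1, ← sum_mul, h2, invPolya]
      ring
    rw [← hk, ← sum_coe_sort]
    rfl

/-- Multiplication by `k` shifts the parameters of the inverse Pólya law. -/
lemma invPolya_shift {α a b : ℝ} (ha : 0 < a - α) (M k : ℕ) :
    ((k : ℝ) + 1) * invPolya α M a b (k + 1) =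
      ((M : ℝ) + 1) * b / (a - α) * invPolya α (M + 1) (a - α) (b + α) k := by
  have hc : ((M + (k + 1)).choose (k + 1) : ℝ) * ((k : ℝ) + 1) =
      (M + 1 + k).choose k * ((M : ℝ) + 1) := by
    have := Nat.choose_succ_right_eq (M + 1 + k) k
    rw [show M + 1 + k - k = M + 1 by omega] at this
    rw [show M + (k + 1) = M + 1 + k by ring]
    exact_mod_cast this
  have e1 : a - α + (b + α) = a + b := by ring
  have e2 : a - α + α = a := by ring
  have e3 : M + 1 + (k + 1) = M + 1 + 1 + k := by ring
  simp only [invPolya, R_succ' α b k, R_succ' α (a - α) (M + 1), e1, e2, e3]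
  have hne := ha.ne'
  rw [div_mul_eq_mul_div, eq_div_iff hne]
  linear_combination (b * R α (b + α) k * R α a (M + 1) * (a - α) /
    R α (a + b) (M + 1 + 1 + k)) * hc

lemma hasSum_invPolya_one {α a b : ℝ} (hα : 0 ≤ α) (ha : 0 < a - α) (hb : 0 ≤ b) (M : ℕ) :
    HasSum (fun k : ℕ => (k : ℝ) * invPolya α M a b k) ((M + 1) * b / (a - α)) := by
  refine hasSum_of_shift (by simp) ?_
  push_cast
  simp only [invPolya_shift ha]
  simpa using (hasSum_invPolya (a := a - α) (b := b + α) hα ha (by linarith) (M + 1)).mul_left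
    (((M : ℝ) + 1) * b / (a - α))

lemma hasSum_invPolya_two {α a b : ℝ} (hα : 0 ≤ α) (ha : 0 < a - α - α) (hb : 0 ≤ b) (M : ℕ) :
    HasSum (fun k : ℕ => (k : ℝ) * (k - 1) * invPolya α M a b k)
      ((M + 1) * b / (a - α) * ((M + 1 + 1) * (b + α) / (a - α - α))) := by
  have ha' : 0 < a - α := by linarith
  refine hasSum_of_shift (by simp) ?_
  refine hasSum_congr_of_eq ((hasSum_invPolya_one (a := a - α) (b := b + α) hα ha (by linarith)
    (M + 1)).mul_left (((M : ℝ) + 1) * b / (a - α))) (fun k => ?_) ?_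
  · push_cast
    linear_combination (k : ℝ) * invPolya_shift (b := b) ha' M k
  · push_cast
    ring

/-! ### The operator -/

/-- The second moment about `x` in terms of the first two factorial moments. -/
lemma hasSum_central {v : ℕ → ℝ} {m₁ m₂ : ℝ} (h0 : HasSum v 1)
    (h1 : HasSum (fun k : ℕ => (k : ℝ) * v k) m₁)
    (h2 : HasSum (fun k : ℕ => (k : ℝ) * (k - 1) * v k) m₂) (n : ℕ) (x : ℝ) :
    HasSum (fun k : ℕ => v k * ((k : ℝ) / n - x) ^ 2)
      ((m₂ + m₁) / (n : ℝ) ^ 2 - 2 * x * m₁ / n + x ^ 2) := by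
  refine hasSum_congr_of_eq (((h2.mul_left (1 / (n : ℝ) ^ 2)).add
    (h1.mul_left (1 / (n : ℝ) ^ 2 - 2 * x / n))).add (h0.mul_left (x ^ 2))) (fun k => ?_) ?_
  · ring
  · ring

lemma w_neg_one (n p : ℕ) (hn : 1 ≤ n) (α x : ℝ) :
    w n p (-1) α x = polya α (n + p) x (1 - x) := by
  funext k
  have hN : (n : ℝ) + p ≠ 0 := by positivity
  have e1 : ((n : ℤ) + p + (-1) * k).toNat = n + p - k := by omega
  have e2 : ((n : ℤ) + p + (-1 + 1) * k).toNat = n + p := by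
    rw [neg_add_cancel, zero_mul]; omega
  rw [w, e1, e2]
  simp [polya, R, div_self hN, sub_eq_add_neg]

lemma w_zero (n p M : ℕ) (hM : n + p = M + 1) (α x : ℝ) :
    w n p 0 α x = invPolya α M 1 x := by
  funext k
  have hN : (n : ℝ) + p = M + 1 := by exact_mod_cast hM
  have e1 : ((n : ℤ) + p + 0 * k).toNat = M + 1 := by omega
  have e2 : ((n : ℤ) + p + (0 + 1) * k).toNat = M + 1 + k := by omega
  have hc : ((M : ℝ) + 1) * (M + 1 + k).choose k = (M + k).choose k * ((M : ℝ) + 1 + k) := by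
    have := Nat.choose_mul_succ_eq (M + k) k
    rw [show M + k + 1 - k = M + 1 by omega, show M + k + 1 = M + 1 + k by ring] at this
    have h : (((M + k).choose k * (M + 1 + k) : ℕ) : ℝ) = ((M + 1 + k).choose k * (M + 1) : ℕ) := by
      exact_mod_cast this
    push_cast at h
    linarith
  have hne : (M : ℝ) + 1 + k ≠ 0 := by positivity
  have hq : ((M : ℝ) + 1) / ((M : ℝ) + 1 + k) * (M + 1 + k).choose k = (M + k).choose k := by
    rw [div_mul_eq_mul_div, hc, mul_div_cancel_right₀ _ hne]
  rw [w, e1, e2, hN]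
  simp only [Int.cast_zero, zero_add, one_mul, zero_mul, add_zero, hq]
  rfl

/-- the second central moment of the generalized operator, for
`0 ≤ α < 1/2`, the sum/series being convergent. -/
theorem second_central_moment (n p : ℕ) (hn : 1 ≤ n) (lam : ℤ) (hlam : lam = -1 ∨ lam = 0)
    (α : ℝ) (hα : 0 ≤ α) (hα2 : α < 1/2) (x : ℝ) (hx : x ∈ Iset lam) :
    HasSum (fun k : ℕ => w n p lam α x k * ((k : ℝ) / n - x) ^ 2)
      (((n : ℝ) + p) / ((n : ℝ) * (1 - (lam : ℝ) * α) * (1 - ((lam : ℝ) + 1) * α)) *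
        ((1 - (lam : ℝ) * α) * (1 - ((lam : ℝ) + 1) * α) * (n : ℝ) * x ^ 2 / ((n : ℝ) + p) +
          ((n : ℝ) + p + (lam : ℝ) + 1) * x * (x + α) /
            ((n : ℝ) * (1 - 2 * ((lam : ℝ) + 1) * α)) +
          x * (1 + (lam : ℝ) * x) / n -
          2 * (1 - (lam : ℝ) * α) * x ^ 2)) := by
  have hn0 : (n : ℝ) ≠ 0 := by positivity
  have hN0 : (n : ℝ) + p ≠ 0 := by positivity
  rcases hlam with rfl | rfl
  · have hab : 0 < x + (1 - x) := by linarith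
    have hα1 : 1 + α ≠ 0 := by positivity
    rw [w_neg_one n p hn]
    refine hasSum_congr_of_eq (hasSum_central (hasSum_polya hα hab (n + p))
      (hasSum_polya_one hα hab (n + p)) (hasSum_polya_two hα hab (n + p)) n x) (fun _ => rfl) ?_
    have e : x + (1 - x) = 1 := by ring
    rw [e]
    push_cast
    have e2 : 1 - (-1) * α = 1 + α := by ring
    simp only [e2, neg_add_cancel, zero_mul, mul_zero, sub_zero, mul_one]
    field_simp
    ring
  · have hx0 : 0 ≤ x := by simpa [Iset] using hx
    obtain ⟨M, hM⟩ : ∃ M, n + p = M + 1 := ⟨n + p - 1, by omega⟩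
    have hN : (n : ℝ) + p = M + 1 := by exact_mod_cast hM
    have h1 : 0 < 1 - α := by linarith
    have h2 : 0 < 1 - α - α := by linarith
    rw [w_zero n p M hM]
    refine hasSum_congr_of_eq (hasSum_central (hasSum_invPolya hα one_pos hx0 M)
      (hasSum_invPolya_one hα h1 hx0 M) (hasSum_invPolya_two hα h2 hx0 M) n x) (fun _ => rfl) ?_
    have e : 1 - α - α = 1 - 2 * α := by ring
    rw [e] at h2 ⊢
    rw [hN] at hN0 ⊢
    have h1' := h1.ne'
    have h2' := h2.ne'
    simp only [Int.cast_zero, zero_mul, sub_zero, zero_add, one_mul, mul_one, add_zero]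
    field_simp
    ring
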